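/- For every d ≥ 1 and every m ∈ ℚ_{>0}, there exists a regular d-simplex of squared edge length m with vertices in ℚ^{d+3}: i.e. d+1 affinely independent points of ℚ^{d+3} with all pairwise squared distances equal to m. -/

import Mathlib

/-- A regular `d`-simplex in `ℚⁿ` of squared edge length `m`. -/
def IsRegularSimplex (d n : ℕ) (m : ℚ) (v : Fin (d + 1) → Fin n → ℚ) : Prop :=
  AffineIndependent ℚ v ∧ ∀ i j, i ≠ j → ∑ k, (v i k - v j k) ^ 2 = m

/-!
If `U * Uᵀ = (m / 2) • 1`, the rows of `U` are at squared distance `m` from each other. In size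
`n` divisible by `4` such a `U` is built from blocks of multiplication by a quaternion of norm
`m / 2`, and when `4 ∤ d` some multiple of `4` lies between `d + 1` and `d + 3`.

When `4 ∣ d` we start from size `d + 4` and have to save one coordinate. By a reflection, the
first column of `U` can be made any vector of squared length `m / 2`; if its first `d + 1` entries
agree, then the first `d + 1` rows differ only in the other `d + 3` coordinates. Such a column is a
solution of `(d + 1) w² + x² + y² + z² = m / 2`. As `d + 1 ≡ 1 [MOD 4]`, this reduces to
writing naturals `≡ 1, 2 [MOD 4]` as sums of three rational squares, which is done as in Ankeny's
proof of the three-square theorem: Dirichlet's theorem supplies a prime `q ≡ 1 [MOD 4]`, a sum of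
two squares, for which Legendre's argument represents the number by `x² + q y²`.
-/

section SumsOfSquares

open scoped NumberTheorySymbols

lemma exists_prime_modEq_isSquare_of_jacobiSym_eq_one {N m : ℕ} (hN : N ≠ 0) (hm : Odd m)
    (hJ : J(N | m) = 1) : ∃ q : ℕ, q.Prime ∧ q ≡ m [MOD 4 * N] ∧ IsSquare (N : ZMod q) := by
  have : NeZero m := ⟨hm.pos.ne'⟩
  have hmN : m.Coprime N := by
    by_contra h
    have : J(N | m) = 0 := jacobiSym.eq_zero_iff_not_coprime.mpr (by simpa [Nat.gcd_comm] using h)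
    omega
  have hm4 : m.Coprime 4 := (Nat.coprime_two_right.mpr hm).pow_right 2
  obtain ⟨q, -, hq, hqm⟩ :=
    Nat.forall_exists_prime_gt_and_modEq 0 (q := 4 * N) (by omega) (hm4.mul_right hmN)
  have hq2 : Odd q := by
    have : q ≡ m [MOD 4] := hqm.of_mul_right N
    grind [Nat.ModEq]
  have hJq : J(N | q) = 1 := by
    rw [jacobiSym.mod_right' N hq2, hqm, ← jacobiSym.mod_right' N hm, hJ]
  have : Fact q.Prime := ⟨hq⟩
  exact ⟨q, hq, hqm, by simpa using ZMod.isSquare_of_jacobiSym_eq_one hJq⟩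

lemma exists_dvd_add_one_jacobiSym_eq_one {N : ℕ} (hN : N % 4 = 1 ∨ N % 4 = 2) :
    ∃ m : ℕ, m % 4 = 1 ∧ N ∣ m + 1 ∧ J(N | m) = 1 := by
  rcases hN with hN | hN
  · refine ⟨2 * N - 1, by omega, ⟨2, by omega⟩, ?_⟩
    have hodd : Odd N := Nat.odd_iff.mpr (by omega)
    have hmod : ((2 * N - 1 : ℕ) : ℤ) % N = -1 % N :=
      Int.ModEq.symm <| Int.modEq_iff_dvd.mpr ⟨2, by omega⟩
    rw [jacobiSym.quadratic_reciprocity_one_mod_four hN (Nat.odd_iff.mpr (by omega)),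
      jacobiSym.mod_left' hmod, jacobiSym.at_neg_one hodd, ZMod.χ₄_nat_one_mod_four hN]
  · refine ⟨N - 1, by omega, ⟨1, by omega⟩, ?_⟩
    have hmod : (N : ℤ) % (N - 1 : ℕ) = 1 % (N - 1 : ℕ) :=
      Int.ModEq.symm <| Int.modEq_iff_dvd.mpr ⟨1, by omega⟩
    rw [jacobiSym.mod_left' hmod, jacobiSym.one_left]

lemma exists_prime_dvd_add_one_isSquare {N : ℕ} (hN : N % 4 = 1 ∨ N % 4 = 2) :
    ∃ q : ℕ, q.Prime ∧ q % 4 = 1 ∧ N ∣ q + 1 ∧ IsSquare (N : ZMod q) := by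
  obtain ⟨m, hm, hNm, hJ⟩ := exists_dvd_add_one_jacobiSym_eq_one hN
  obtain ⟨q, hq, hqm, hsq⟩ := exists_prime_modEq_isSquare_of_jacobiSym_eq_one (by omega)
    (Nat.odd_iff.mpr (by omega)) hJ
  have hqm4 : q ≡ m [MOD 4] := hqm.of_mul_right N
  have hqmN : q + 1 ≡ m + 1 [MOD N] := (hqm.of_mul_left 4).add_right 1
  exact ⟨q, hq, Eq.trans hqm4 hm, (hqmN.dvd_iff dvd_rfl).mpr hNm, hsq⟩

lemma exists_ne_zero_abs_le_map_eq_zero {ι G : Type*} [Fintype ι] [AddGroup G] [Fintype G]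
    (f : (ι → ℤ) →+ G) (B : ι → ℕ) (hB : Fintype.card G < ∏ i, (B i + 1)) :
    ∃ x ≠ 0, (∀ i, |x i| ≤ (B i : ℤ)) ∧ f x = 0 := by
  classical
  let box : Finset (ι → ℤ) := Finset.Icc 0 fun i => (B i : ℤ)
  have hbox : (Finset.univ : Finset G).card < box.card := by
    simpa [box, Pi.card_Icc] using hB
  obtain ⟨x, hx, y, hy, hxy, hf⟩ := Finset.exists_ne_map_eq_of_card_lt_of_maps_to hbox
    (f := f) (fun _ _ => Finset.mem_coe.mpr (Finset.mem_univ _))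
  rw [Finset.mem_Icc] at hx hy
  refine ⟨x - y, sub_ne_zero.mpr hxy, fun i => ?_, by rw [map_sub, hf, sub_self]⟩
  exact abs_sub_le_of_nonneg_of_le (hx.1 i) (hx.2 i) (hy.1 i) (hy.2 i)

lemma exists_small_zmod_solution {N q : ℕ} (hN : 0 < N) (hq : 0 < q) (b : ZMod q) :
    ∃ x y z : ℤ, ¬(x = 0 ∧ y = 0 ∧ z = 0) ∧ x ^ 2 ≤ q * N ∧ y ^ 2 ≤ N ∧ z ^ 2 ≤ q ∧
      (x : ZMod N) = y ∧ (x : ZMod q) = b * z := by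
  have : NeZero N := ⟨hN.ne'⟩
  have : NeZero q := ⟨hq.ne'⟩
  let f : (Fin 3 → ℤ) →+ ZMod N × ZMod q :=
    AddMonoidHom.mk' (fun x => ((x 0 - x 1 : ℤ), x 0 - b * x 2)) fun x y => by
      ext <;> push_cast [Pi.add_apply, Prod.fst_add, Prod.snd_add] <;> ring
  let B : Fin 3 → ℕ := ![(q * N).sqrt, N.sqrt, q.sqrt]
  have hcard : Fintype.card (ZMod N × ZMod q) < ∏ i, (B i + 1) := by
    simp only [Fintype.card_prod, ZMod.card, Fin.prod_univ_three, B, Matrix.cons_val]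
    refine lt_of_pow_lt_pow_left₀ 2 (Nat.zero_le _) ?_
    calc (N * q) ^ 2 = q * N * N * q := by ring
      _ < ((q * N).sqrt + 1) ^ 2 * (N.sqrt + 1) ^ 2 * (q.sqrt + 1) ^ 2 := by
        gcongr <;> exact Nat.lt_succ_sqrt' _
      _ = _ := by ring
  obtain ⟨x, hx0, hxB, hfx⟩ := exists_ne_zero_abs_le_map_eq_zero f B hcard
  have sq_le {a : ℤ} {n : ℕ} (h : |a| ≤ n.sqrt) : a ^ 2 ≤ n := by
    calc a ^ 2 = |a| ^ 2 := (sq_abs a).symm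
      _ ≤ (n.sqrt : ℤ) ^ 2 := by gcongr
      _ ≤ n := mod_cast n.sqrt_le'
  have hf : (x 0 : ZMod N) - x 1 = 0 ∧ (x 0 : ZMod q) - b * x 2 = 0 := by
    simpa [f] using hfx
  refine ⟨x 0, x 1, x 2, fun ⟨h₀, h₁, h₂⟩ => hx0 ?_, mod_cast sq_le (hxB 0), sq_le (hxB 1),
    sq_le (hxB 2), sub_eq_zero.mp hf.1, sub_eq_zero.mp hf.2⟩
  ext i
  fin_cases i <;> assumption

lemma mul_dvd_sq_add_mul_sq_sub_mul_sq {N q : ℕ} (hNq : N ∣ q + 1) {b : ZMod q}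
    (hb : (N : ZMod q) = b * b) {x y z : ℤ} (hxy : (x : ZMod N) = y)
    (hxz : (x : ZMod q) = b * z) : (q * N : ℤ) ∣ x ^ 2 + q * y ^ 2 - N * z ^ 2 := by
  have hcop : IsCoprime (q : ℤ) N := by
    obtain ⟨c, hc⟩ := hNq
    exact ⟨-1, c, by linear_combination -(mod_cast hc : (q + 1 : ℤ) = N * c)⟩
  refine hcop.mul_dvd ?_ ?_
  · rw [← ZMod.intCast_zmod_eq_zero_iff_dvd _ q]
    push_cast
    rw [hxz, hb, ZMod.natCast_self]
    ring
  · rw [← ZMod.intCast_zmod_eq_zero_iff_dvd _ N]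
    have h : (q + 1 : ZMod N) = 0 := mod_cast (ZMod.natCast_eq_zero_iff _ _).mpr hNq
    push_cast
    rw [hxy, ZMod.natCast_self]
    linear_combination (y : ZMod N) ^ 2 * h

lemma exists_sq_add_mul_sq_eq_mul {N q : ℕ} (hN : 0 < N) (hq : q.Prime) (hNq : N ∣ q + 1)
    (hsq : IsSquare (N : ZMod q)) :
    ∃ x y s t : ℤ, (s ≠ 0 ∨ t ≠ 0) ∧ N * (s ^ 2 + q * t ^ 2) = x ^ 2 + q * y ^ 2 := by
  obtain ⟨b, hb⟩ := hsq
  obtain ⟨x, y, z, hne, hx, hy, hz, hxy, hxz⟩ := exists_small_zmod_solution hN hq.pos b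
  obtain ⟨k, hk⟩ := mul_dvd_sq_add_mul_sq_sub_mul_sq hNq hb hxy hxz
  have hN0 : (0 : ℤ) < N := mod_cast hN
  have hq0 : (0 : ℤ) < q := mod_cast hq.pos
  have hz' : z ^ 2 < q := hz.lt_of_ne fun h =>
    (Nat.prime_iff_prime_int.mp hq).irreducible.not_isSquare ⟨z, by rw [← h, sq]⟩
  have hqy : q * y ^ 2 ≤ q * N := by gcongr
  have hNz : N * z ^ 2 < N * q := by gcongr
  have hk_gt : -1 < k := by
    refine lt_of_mul_lt_mul_left ?_ (mul_pos hq0 hN0).le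
    linarith [sq_nonneg x, mul_nonneg hq0.le (sq_nonneg y)]
  have hk_le : k ≤ 2 := by
    refine le_of_mul_le_mul_left ?_ (mul_pos hq0 hN0)
    linarith [mul_nonneg hN0.le (sq_nonneg z)]
  obtain rfl | rfl | rfl : k = 0 ∨ k = 1 ∨ k = 2 := by omega
  · refine ⟨x, y, z, 0, .inl ?_, by linear_combination -hk⟩
    rintro rfl
    have hsum : x ^ 2 + q * y ^ 2 = 0 := by linear_combination hk
    obtain ⟨hx0, hy0⟩ := (add_eq_zero_iff_of_nonneg (sq_nonneg x) (by positivity)).mp hsum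
    exact hne ⟨by simpa using hx0, by simpa [hq.ne_zero] using hy0, rfl⟩
  · exact ⟨x, y, z, 1, .inr one_ne_zero, by linear_combination -hk⟩
  · have hyN : y ^ 2 = N := by
      refine hy.antisymm (le_of_mul_le_mul_left ?_ hq0)
      linarith [mul_nonneg hN0.le (sq_nonneg z)]
    exact ⟨y, 0, 1, 0, .inl one_ne_zero, by linear_combination -hyN⟩

lemma exists_eq_sq_add_mul_sq_of_mul_eq {K : Type*} [Field K] {a n x y s t : K}
    (hst : s ^ 2 + a * t ^ 2 ≠ 0) (h : n * (s ^ 2 + a * t ^ 2) = x ^ 2 + a * y ^ 2) :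
    ∃ u v : K, n = u ^ 2 + a * v ^ 2 := by
  -- `(x + y √-a) / (s + t √-a) = u + v √-a`
  refine ⟨(x * s + a * y * t) / (s ^ 2 + a * t ^ 2), (y * s - x * t) / (s ^ 2 + a * t ^ 2), ?_⟩
  field_simp
  linear_combination (s ^ 2 + a * t ^ 2) * h

lemma exists_rat_eq_sq_add_prime_mul_sq {N q : ℕ} (hN : 0 < N) (hq : q.Prime) (hNq : N ∣ q + 1)
    (hsq : IsSquare (N : ZMod q)) : ∃ u v : ℚ, (N : ℚ) = u ^ 2 + q * v ^ 2 := by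
  obtain ⟨x, y, s, t, hst, h⟩ := exists_sq_add_mul_sq_eq_mul hN hq hNq hsq
  have hq0 : (0 : ℚ) < q := mod_cast hq.pos
  have hden : (s ^ 2 + q * t ^ 2 : ℚ) ≠ 0 := by
    rcases hst with hs | ht <;> positivity
  exact exists_eq_sq_add_mul_sq_of_mul_eq (x := x) (y := y) hden (mod_cast h)

lemma exists_rat_sum_three_sq_of_mod_four {N : ℕ} (hN : N % 4 = 1 ∨ N % 4 = 2) :
    ∃ x y z : ℚ, x ^ 2 + y ^ 2 + z ^ 2 = N := by
  obtain ⟨q, hq, hq4, hNq, hsq⟩ := exists_prime_dvd_add_one_isSquare hN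
  obtain ⟨u, v, huv⟩ := exists_rat_eq_sq_add_prime_mul_sq (by omega) hq hNq hsq
  have : Fact q.Prime := ⟨hq⟩
  obtain ⟨a, b, rfl⟩ := Nat.Prime.sq_add_sq (p := q) (by omega)
  exact ⟨u, a * v, b * v, by rw [huv]; push_cast; ring⟩

lemma exists_squarefree_mul_sq_eq {r : ℚ} (hr : 0 ≤ r) :
    ∃ (a : ℕ) (s : ℚ), Squarefree a ∧ a * s ^ 2 = r := by
  obtain ⟨p, hp⟩ := Int.eq_ofNat_of_zero_le (Rat.num_nonneg.mpr hr)
  obtain ⟨a, b, hab, ha⟩ := Nat.sq_mul_squarefree (p * r.den)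
  refine ⟨a, b / r.den, ha, ?_⟩
  have hden : (r.den : ℚ) ≠ 0 := mod_cast r.den_nz
  have hab' : (b : ℚ) ^ 2 * a = p * r.den := mod_cast hab
  calc (a : ℚ) * (b / r.den) ^ 2 = p / r.den := by
        field_simp
        linear_combination hab'
    _ = r.num / r.den := by rw [hp, Int.cast_natCast]
    _ = r := Rat.num_div_den r

lemma exists_rat_sum_four_sq {r : ℚ} (hr : 0 ≤ r) :
    ∃ a b c d : ℚ, a ^ 2 + b ^ 2 + c ^ 2 + d ^ 2 = r := by
  obtain ⟨t, s, -, rfl⟩ := exists_squarefree_mul_sq_eq hr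
  obtain ⟨a, b, c, d, rfl⟩ := Nat.sum_four_squares t
  exact ⟨a * s, b * s, c * s, d * s, by push_cast; ring⟩

lemma exists_natCast_eq_mul_sq_add_sum_three_sq {n a : ℕ} (hn : n % 4 = 1) (ha : a % 4 ≠ 0) :
    ∃ w x y z : ℚ, n * w ^ 2 + x ^ 2 + y ^ 2 + z ^ 2 = a := by
  by_cases ha3 : a % 4 = 3
  -- Subtracting `n` from an odd square multiple of `a` gives a residue `2` modulo `4`; the factor
  -- `2 n + 1` keeps the difference nonnegative.
  · have hle : n ≤ a * (2 * n + 1) ^ 2 := by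
      calc n ≤ 1 * (2 * n + 1) ^ 2 := by nlinarith
        _ ≤ a * (2 * n + 1) ^ 2 := by gcongr; omega
    have hmod : (a * (2 * n + 1) ^ 2 - n) % 4 = 2 := by
      have : a * (2 * n + 1) ^ 2 = 4 * (a * (n ^ 2 + n)) + a := by ring
      omega
    obtain ⟨x, y, z, h⟩ := exists_rat_sum_three_sq_of_mod_four (.inr hmod)
    push_cast [Nat.cast_sub hle] at h
    refine ⟨1 / (2 * n + 1), x / (2 * n + 1), y / (2 * n + 1), z / (2 * n + 1), ?_⟩
    field_simp
    linear_combination h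
  · obtain ⟨x, y, z, h⟩ := exists_rat_sum_three_sq_of_mod_four (N := a) (by omega)
    exact ⟨0, x, y, z, by linear_combination h⟩

lemma exists_rat_eq_mul_sq_add_sum_three_sq {n : ℕ} (hn : n % 4 = 1) {r : ℚ} (hr : 0 ≤ r) :
    ∃ w x y z : ℚ, n * w ^ 2 + x ^ 2 + y ^ 2 + z ^ 2 = r := by
  obtain ⟨a, s, ha, rfl⟩ := exists_squarefree_mul_sq_eq hr
  have ha4 : a % 4 ≠ 0 := fun h => by simpa using ha 2 (Nat.dvd_of_mod_eq_zero h)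
  obtain ⟨w, x, y, z, h⟩ := exists_natCast_eq_mul_sq_add_sum_three_sq hn ha4
  exact ⟨w * s, x * s, y * s, z * s, by rw [← h]; ring⟩

end SumsOfSquares

section Similitudes

open scoped Matrix Kronecker

/-- The matrix of right multiplication by the quaternion `a + b i + c j + d k`, acting on row
vectors of coordinates in the basis `1, i, j, k`. -/
def quaternionMatrix {R : Type*} [CommRing R] (a b c d : R) : Matrix (Fin 4) (Fin 4) R :=
  !![a, b, c, d; -b, a, -d, c; -c, d, a, -b; -d, -c, b, a]

lemma quaternionMatrix_mul_transpose {R : Type*} [CommRing R] (a b c d : R) :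
    quaternionMatrix a b c d * (quaternionMatrix a b c d)ᵀ =
      (a ^ 2 + b ^ 2 + c ^ 2 + d ^ 2) • 1 := by
  ext i j
  fin_cases i <;> fin_cases j <;>
    simp [quaternionMatrix, Matrix.mul_apply, Fin.sum_univ_four] <;> ring

lemma exists_mul_transpose_eq_smul_one {n : ℕ} (hn : 4 ∣ n) {c : ℚ} (hc : 0 ≤ c) :
    ∃ U : Matrix (Fin n) (Fin n) ℚ, U * Uᵀ = c • 1 := by
  obtain ⟨k, rfl⟩ := hn
  obtain ⟨x, y, z, t, rfl⟩ := exists_rat_sum_four_sq hc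
  let Q := quaternionMatrix x y z t ⊗ₖ (1 : Matrix (Fin k) (Fin k) ℚ)
  have hQ : Q * Qᵀ = (x ^ 2 + y ^ 2 + z ^ 2 + t ^ 2) • 1 := by
    simp only [Q, ← Matrix.kroneckerMap_transpose, ← Matrix.mul_kronecker_mul,
      quaternionMatrix_mul_transpose, Matrix.transpose_one, mul_one, Matrix.smul_kronecker,
      Matrix.one_kronecker_one]
  refine ⟨Q.submatrix finProdFinEquiv.symm finProdFinEquiv.symm, ?_⟩
  rw [Matrix.transpose_submatrix, Matrix.submatrix_mul_equiv, hQ, Matrix.submatrix_smul]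
  simp

variable {n K : Type*} [Fintype n] [DecidableEq n] [Field K]

/-- The matrix of the reflection in the hyperplane orthogonal to `w`. For isotropic `w` it is the
identity, because then `2 / (w ⬝ᵥ w) = 0`. -/
def householder (w : n → K) : Matrix n n K :=
  1 - (2 / (w ⬝ᵥ w)) • Matrix.vecMulVec w w

lemma transpose_householder (w : n → K) : (householder w)ᵀ = householder w := by
  simp [householder, Matrix.transpose_vecMulVec]

lemma householder_mul_self (w : n → K) : householder w * householder w = 1 := by
  by_cases hw : w ⬝ᵥ w = 0
  · simp [householder, hw]
  · simp only [householder, sub_mul, mul_sub, one_mul, mul_one, Matrix.smul_mul, Matrix.mul_smul,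
      Matrix.vecMulVec_mul_vecMulVec, Matrix.vecMulVec_smul, smul_smul]
    rw [div_mul_cancel₀ _ hw]
    module

lemma householder_sub_mulVec [LinearOrder K] [IsStrictOrderedRing K] {a b : n → K}
    (h : a ⬝ᵥ a = b ⬝ᵥ b) : householder (a - b) *ᵥ a = b := by
  by_cases hab : (a - b) ⬝ᵥ (a - b) = 0
  · simp [householder, sub_eq_zero.mp (dotProduct_self_eq_zero.mp hab)]
  · have hdot : 2 * ((a - b) ⬝ᵥ a) = (a - b) ⬝ᵥ (a - b) := by
      simp only [sub_dotProduct, dotProduct_sub, dotProduct_comm b a]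
      linear_combination h
    have hcoef : 2 / ((a - b) ⬝ᵥ (a - b)) * ((a - b) ⬝ᵥ a) = 1 := by
      rw [div_mul_eq_mul_div, hdot, div_self hab]
    rw [householder, Matrix.sub_mulVec, Matrix.one_mulVec, Matrix.smul_mulVec,
      Matrix.vecMulVec_mulVec, op_smul_eq_smul, smul_smul, hcoef, one_smul, sub_sub_cancel]

lemma exists_mul_transpose_eq_smul_one_col_eq [LinearOrder K] [IsStrictOrderedRing K] {c : K}
    (hc : c ≠ 0) {U : Matrix n n K} (hU : U * Uᵀ = c • 1) {p : n → K} (hp : p ⬝ᵥ p = c) (k : n) :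
    ∃ V : Matrix n n K, V * Vᵀ = c • 1 ∧ V.col k = p := by
  let e : n → K := Pi.single k 1
  let f : n → K := c⁻¹ • Uᵀ *ᵥ p
  have hUf : U *ᵥ f = p := by
    simp [f, Matrix.mulVec_smul, hU, Matrix.smul_mulVec, hc]
  have hff : e ⬝ᵥ e = f ⬝ᵥ f := by
    calc e ⬝ᵥ e = 1 := by simp [e]
      _ = c⁻¹ * (p ⬝ᵥ (U *ᵥ f)) := by rw [hUf, hp, inv_mul_cancel₀ hc]
      _ = c⁻¹ * ((Uᵀ *ᵥ p) ⬝ᵥ f) := by rw [Matrix.dotProduct_mulVec, Matrix.mulVec_transpose]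
      _ = f ⬝ᵥ f := by rw [← smul_eq_mul, ← smul_dotProduct]
  let H := householder (e - f)
  have hH : H * Hᵀ = 1 := by rw [transpose_householder, householder_mul_self]
  refine ⟨U * H, ?_, ?_⟩
  · rw [Matrix.transpose_mul, Matrix.mul_assoc, ← Matrix.mul_assoc H, hH, Matrix.one_mul, hU]
  · rw [← Matrix.mulVec_single_one, ← Matrix.mulVec_mulVec, householder_sub_mulVec hff, hUf]

end Similitudes

section Equidistant

variable {ι κ R : Type*} [Fintype κ] [CommRing R]

/-- A family of points of `R^κ` with all pairwise squared Euclidean distances equal to `m`. This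
is the metric part of `IsRegularSimplex`, in the same form. -/
def IsEquidistant (m : R) (v : ι → κ → R) : Prop :=
  ∀ i j, i ≠ j → ∑ k, (v i k - v j k) ^ 2 = m

lemma sum_mul_mul_sub_sq (s : Finset ι) (w x : ι → R) :
    ∑ i ∈ s, ∑ j ∈ s, w i * w j * (x i - x j) ^ 2 =
      2 * ((∑ i ∈ s, w i) * ∑ i ∈ s, w i * x i ^ 2 - (∑ i ∈ s, w i * x i) ^ 2) := by
  have hexpand (i j : ι) : w i * w j * (x i - x j) ^ 2 =
      w i * x i ^ 2 * w j - 2 * (w i * x i * (w j * x j)) + w i * (w j * x j ^ 2) := by ring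
  simp only [hexpand, Finset.sum_add_distrib, Finset.sum_sub_distrib, ← Finset.mul_sum,
    ← Finset.sum_mul]
  ring

namespace IsEquidistant

variable {m : R} {v : ι → κ → R}

lemma comp_injective (hv : IsEquidistant m v) {ι' : Type*} {f : ι' → ι}
    (hf : Function.Injective f) : IsEquidistant m (v ∘ f) :=
  fun i j hij => hv (f i) (f j) (hf.ne hij)

lemma extend_zero (hv : IsEquidistant m v) {κ' : Type*} [Fintype κ'] {f : κ → κ'}
    (hf : Function.Injective f) : IsEquidistant m fun i => Function.extend f (v i) 0 := by
  intro i j hij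
  rw [← hv i j hij]
  refine (Fintype.sum_of_injective f hf _ _ (fun k hk => ?_) fun k => ?_).symm
  · simp [Function.extend_apply' _ _ _ hk]
  · simp [hf.extend_apply]

lemma tail {n : ℕ} {v : ι → Fin (n + 1) → R} (hv : IsEquidistant m v)
    (h0 : ∀ i j, v i 0 = v j 0) : IsEquidistant m fun i => Fin.tail (v i) := by
  intro i j hij
  rw [← hv i j hij, Fin.sum_univ_succ, h0 i j, sub_self, zero_pow two_ne_zero, zero_add]
  rfl

lemma of_mul_transpose_eq_smul_one [DecidableEq ι] {c : R} {U : Matrix ι κ R}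
    (hU : U * U.transpose = c • 1) : IsEquidistant (2 * c) U := by
  have hdot (i j : ι) : U i ⬝ᵥ U j = if i = j then c else 0 := by
    simpa [Matrix.mul_apply, dotProduct, Matrix.one_apply] using congr_fun₂ hU i j
  intro i j hij
  calc ∑ k, (U i k - U j k) ^ 2 = (U i - U j) ⬝ᵥ (U i - U j) := by simp [dotProduct, sq]
    _ = U i ⬝ᵥ U i - 2 * (U i ⬝ᵥ U j) + U j ⬝ᵥ U j := by
      simp only [sub_dotProduct, dotProduct_sub, dotProduct_comm (U j) (U i)]
      ring
    _ = 2 * c := by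
      simp only [hdot, if_pos, if_neg hij]
      ring

lemma affineIndependent {K : Type*} [Field K] [LinearOrder K] [IsStrictOrderedRing K] {m : K}
    {v : ι → κ → K} (hv : IsEquidistant m v) (hm : m ≠ 0) : AffineIndependent K v := by
  classical
  rw [affineIndependent_iff]
  intro s w hw hwv
  have hcoord (k : κ) : ∑ i ∈ s, w i * v i k = 0 := by simpa using congr_fun hwv k
  have hrow : ∀ i ∈ s, ∑ j ∈ s, w i * w j * ∑ k, (v i k - v j k) ^ 2 = -m * w i ^ 2 := by
    intro i hi
    have hterm (j : ι) : w i * w j * ∑ k, (v i k - v j k) ^ 2 =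
        m * w i * w j - if i = j then m * w i * w j else 0 := by
      by_cases hij : i = j
      · simp [hij]
      · rw [hv i j hij, if_neg hij]
        ring
    simp only [hterm, Finset.sum_sub_distrib, ← Finset.mul_sum, hw, Finset.sum_ite_eq, if_pos hi]
    ring
  have hsq : -m * ∑ i ∈ s, w i ^ 2 = 0 := by
    calc -m * ∑ i ∈ s, w i ^ 2 = ∑ i ∈ s, ∑ j ∈ s, w i * w j * ∑ k, (v i k - v j k) ^ 2 := by
          rw [Finset.mul_sum, Finset.sum_congr rfl hrow]
      _ = ∑ k, ∑ i ∈ s, ∑ j ∈ s, w i * w j * (v i k - v j k) ^ 2 := by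
          simp only [Finset.mul_sum, Finset.sum_comm (s := s) (t := Finset.univ)]
      _ = 0 := by simp [sum_mul_mul_sub_sq, hw, hcoord]
  have hsum : ∑ i ∈ s, w i ^ 2 = 0 := by simpa [hm] using hsq
  simpa [Finset.sum_eq_zero_iff_of_nonneg fun i _ => sq_nonneg (w i)] using hsum

end IsEquidistant

lemma exists_isEquidistant_of_four_dvd {k n l : ℕ} (hn : 4 ∣ n) (hkn : k ≤ n) (hnl : n ≤ l) {m : ℚ}
    (hm : 0 ≤ m) : ∃ v : Fin k → Fin l → ℚ, IsEquidistant m v := by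
  obtain ⟨U, hU⟩ := exists_mul_transpose_eq_smul_one hn (div_nonneg hm zero_le_two)
  have hrows : IsEquidistant m U := by
    simpa only [mul_div_cancel₀ m two_ne_zero] using IsEquidistant.of_mul_transpose_eq_smul_one hU
  exact ⟨_, (hrows.comp_injective (Fin.castLE_injective hkn)).extend_zero
    (Fin.castLE_injective hnl)⟩

lemma exists_isEquidistant_of_mod_four_eq_one {k : ℕ} (hk : k % 4 = 1) {m : ℚ} (hm : 0 < m) :
    ∃ v : Fin k → Fin (k + 2) → ℚ, IsEquidistant m v := by
  have hm2 : 0 < m / 2 := half_pos hm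
  obtain ⟨w, x, y, z, h⟩ := exists_rat_eq_mul_sq_add_sum_three_sq hk hm2.le
  let p : Fin (k + 3) → ℚ := Fin.append (fun _ => w) ![x, y, z]
  have hp : p ⬝ᵥ p = m / 2 := by
    simp only [p, dotProduct, Fin.sum_univ_add, Fin.append_left, Fin.append_right,
      Fin.sum_univ_three, Matrix.cons_val, Fin.sum_const, nsmul_eq_mul]
    linear_combination h
  obtain ⟨U, hU⟩ := exists_mul_transpose_eq_smul_one (n := k + 3) (by omega) hm2.le
  obtain ⟨V, hV, hcol⟩ := exists_mul_transpose_eq_smul_one_col_eq hm2.ne' hU hp 0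
  have hrows : IsEquidistant m V := by
    simpa only [mul_div_cancel₀ m two_ne_zero] using IsEquidistant.of_mul_transpose_eq_smul_one hV
  have hV0 (i : Fin k) : V (Fin.castAdd 3 i) 0 = w := by
    simpa [p] using congr_fun hcol (Fin.castAdd 3 i)
  exact ⟨_, (hrows.comp_injective (Fin.castAdd_injective k 3)).tail
    fun i j => (hV0 i).trans (hV0 j).symm⟩

end Equidistant

/-- Codimension-`3` stabilization: every positive rational is the squared edge length of a
regular `d`-simplex with vertices in `ℚ^{d+3}`. -/
theorem codim_three_all (d : ℕ) (hd : 1 ≤ d) (m : ℚ) (hm : 0 < m) :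
    ∃ v : Fin (d + 1) → Fin (d + 3) → ℚ, IsRegularSimplex d (d + 3) m v := by
  obtain ⟨v, hv⟩ : ∃ v : Fin (d + 1) → Fin (d + 3) → ℚ, IsEquidistant m v := by
    by_cases h4 : 4 ∣ d
    · exact exists_isEquidistant_of_mod_four_eq_one (by omega) hm
    · exact exists_isEquidistant_of_four_dvd (n := 4 * (d / 4 + 1)) (by omega) (by omega)
        (by omega) hm.le
  exact ⟨v, hv.affineIndependent hm.ne', hv⟩
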